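/- arXiv:1502.00301 — 3 statements merged into one kernel-verified Lean document; each statement's English description precedes it below -/
import Mathlib

section
/- Let n, m be positive natural numbers, let B ∈ ℝ^{n×n} and R ∈ ℝ^{m×m} be symmetric positive definite matrices, let H ∈ ℝ^{m×n}, let x^b ∈ ℝ^n and y ∈ ℝ^m. Then the 3D-Var cost function J(x) = (1/2)·(x − x^b)ᵀ B⁻¹ (x − x^b) + (1/2)·(y − H x)ᵀ R⁻¹ (y − H x) attains its unique global minimum over ℝ^n at the point x^a = x^b + B Hᵀ (R + H B Hᵀ)⁻¹ (y − H x^b). -/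
open Matrix

/-!
The cost function is quadratic with Hessian `B⁻¹ + Hᴴ R⁻¹ H`, which is positive definite, so a
critical point is the unique global minimum. The analysis is critical: with `S = R + H B Hᴴ` and
`w = S⁻¹ (y - H xᵇ)`, its increment is `B Hᴴ w` and, since `S - H B Hᴴ = R`, its residual
`y - H xᵃ` is `R w`; hence both terms of the gradient equal `Hᴴ w`.
-/

namespace ThreeDVar

section QuadraticForm

variable {ι α : Type*} [Fintype ι] [NonUnitalSemiring α] [StarRing α]

lemma star_add_dotProduct_mulVec_add {A : Matrix ι ι α} (hA : A.IsHermitian) (u v : ι → α) :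
    star (u + v) ⬝ᵥ (A *ᵥ (u + v)) =
      star u ⬝ᵥ (A *ᵥ u) + (star v ⬝ᵥ (A *ᵥ u) + star (A *ᵥ u) ⬝ᵥ v) +
        star v ⬝ᵥ (A *ᵥ v) := by
  have cross : star u ⬝ᵥ (A *ᵥ v) = star (A *ᵥ u) ⬝ᵥ v := by
    rw [star_mulVec, hA.eq, dotProduct_mulVec]
  rw [star_add, mulVec_add, add_dotProduct, dotProduct_add, dotProduct_add, cross]
  abel

end QuadraticForm

section Half

variable {𝕜 : Type*} [Field 𝕜] [PartialOrder 𝕜] [StarRing 𝕜] [StarOrderedRing 𝕜]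

-- `a / 2` is the conjugate of `a + a` by the self-adjoint element `1 / 2`.
lemma one_half_mul_pos {a : 𝕜} (ha : 0 < a) : 0 < 1 / 2 * a := by
  have two_ne : (2 : 𝕜) ≠ 0 := by
    rw [← one_add_one_eq_two]
    exact (add_pos one_pos one_pos).ne'
  have half_regular : IsRegular (1 / 2 : 𝕜) :=
    IsRegular.of_ne_zero (one_div_ne_zero two_ne)
  calc 0 < star (1 / 2) * (a + a) * (1 / 2) :=
        star_left_conjugate_pos (add_pos ha ha) half_regular
    _ = 1 / 2 * a := by
        rw [star_div₀, star_one, star_ofNat]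
        field_simp
        ring

end Half

variable {ι κ 𝕜 : Type*} [Fintype ι]

section Definitions

variable [Fintype κ] [DecidableEq ι] [DecidableEq κ] [Field 𝕜] [StarRing 𝕜]
  (B : Matrix ι ι 𝕜) (R : Matrix κ κ 𝕜) (H : Matrix κ ι 𝕜) (xb : ι → 𝕜) (y : κ → 𝕜)

/-- The 3D-Var cost function, with conjugate transposes in place of transposes so that complex
scalars are covered. -/
noncomputable def cost (x : ι → 𝕜) : 𝕜 :=
  (1 / 2) * (star (x - xb) ⬝ᵥ (B⁻¹ *ᵥ (x - xb))) +
    (1 / 2) * (star (y - H *ᵥ x) ⬝ᵥ (R⁻¹ *ᵥ (y - H *ᵥ x)))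

/-- The gradient of the 3D-Var cost function, given by its closed formula; `cost_add` identifies it
as the first-order coefficient of the cost. -/
noncomputable def gradient (x : ι → 𝕜) : ι → 𝕜 :=
  B⁻¹ *ᵥ (x - xb) - Hᴴ *ᵥ (R⁻¹ *ᵥ (y - H *ᵥ x))

/-- The (constant) Hessian of the 3D-Var cost function, given by its closed formula; `cost_add`
identifies it as the second-order coefficient of the cost. -/
noncomputable def hessian : Matrix ι ι 𝕜 :=
  B⁻¹ + Hᴴ * R⁻¹ * H

/-- The covariance of the innovation `y - H xᵇ`. -/
def innovationCov : Matrix κ κ 𝕜 :=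
  R + H * B * Hᴴ

/-- The analysis `xᵃ`: the background state corrected by the Kalman gain `B Hᴴ S⁻¹` applied to the
innovation, where `S` is the innovation covariance. -/
noncomputable def analysis : ι → 𝕜 :=
  xb + (B * Hᴴ * (innovationCov B R H)⁻¹) *ᵥ (y - H *ᵥ xb)

end Definitions

section Algebra

variable [Fintype κ] [DecidableEq κ] [Field 𝕜] [StarRing 𝕜]
  {B : Matrix ι ι 𝕜} {R : Matrix κ κ 𝕜} {H : Matrix κ ι 𝕜}

lemma sub_mulVec_analysis (hS : IsUnit (innovationCov B R H)) (xb : ι → 𝕜) (y : κ → 𝕜) :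
    y - H *ᵥ analysis B R H xb y = R *ᵥ ((innovationCov B R H)⁻¹ *ᵥ (y - H *ᵥ xb)) := by
  set S := innovationCov B R H with S_def
  have innovation_eq : y - H *ᵥ xb = S *ᵥ (S⁻¹ *ᵥ (y - H *ᵥ xb)) := by
    rw [mulVec_mulVec, mul_nonsing_inv _ ((isUnit_iff_isUnit_det _).1 hS), one_mulVec]
  calc y - H *ᵥ analysis B R H xb y
      = (y - H *ᵥ xb) - (H * B * Hᴴ) *ᵥ (S⁻¹ *ᵥ (y - H *ᵥ xb)) := by
        simp only [analysis, ← S_def, mulVec_add, mulVec_mulVec, Matrix.mul_assoc, sub_sub]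
    _ = (S - H * B * Hᴴ) *ᵥ (S⁻¹ *ᵥ (y - H *ᵥ xb)) := by
        rw [sub_mulVec, ← innovation_eq]
    _ = R *ᵥ (S⁻¹ *ᵥ (y - H *ᵥ xb)) := by
        rw [S_def, innovationCov, add_sub_cancel_right]

variable [DecidableEq ι]

lemma cost_add (hB : B.IsHermitian) (hR : R.IsHermitian) (xb : ι → 𝕜) (y : κ → 𝕜) (x e : ι → 𝕜) :
    cost B R H xb y (x + e) =
      cost B R H xb y x +
        (1 / 2) * (star e ⬝ᵥ gradient B R H xb y x + star (gradient B R H xb y x) ⬝ᵥ e) +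
        (1 / 2) * (star e ⬝ᵥ (hessian B R H *ᵥ e)) := by
  have background_shift : x + e - xb = (x - xb) + e := by abel
  have residual_shift : y - H *ᵥ (x + e) = (y - H *ᵥ x) + -(H *ᵥ e) := by
    rw [mulVec_add]; abel
  have adjoint_left (v : κ → 𝕜) : star (H *ᵥ e) ⬝ᵥ v = star e ⬝ᵥ (Hᴴ *ᵥ v) := by
    rw [star_mulVec, dotProduct_mulVec]
  have adjoint_right (v : κ → 𝕜) : star v ⬝ᵥ (H *ᵥ e) = star (Hᴴ *ᵥ v) ⬝ᵥ e := by
    rw [star_mulVec, conjTranspose_conjTranspose, dotProduct_mulVec]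
  simp only [cost, gradient, hessian]
  rw [background_shift, residual_shift, star_add_dotProduct_mulVec_add hB.inv,
    star_add_dotProduct_mulVec_add hR.inv]
  simp only [star_neg, star_sub, mulVec_neg, neg_dotProduct, dotProduct_neg, neg_neg,
    adjoint_left, adjoint_right, sub_dotProduct, dotProduct_sub, add_mulVec, dotProduct_add,
    ← mulVec_mulVec]
  ring

lemma gradient_analysis (hB : IsUnit B) (hR : IsUnit R) (hS : IsUnit (innovationCov B R H))
    (xb : ι → 𝕜) (y : κ → 𝕜) :
    gradient B R H xb y (analysis B R H xb y) = 0 := by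
  set w := (innovationCov B R H)⁻¹ *ᵥ (y - H *ᵥ xb) with w_def
  have background_term : B⁻¹ *ᵥ (analysis B R H xb y - xb) = Hᴴ *ᵥ w := by
    rw [analysis, add_sub_cancel_left, mulVec_mulVec, Matrix.mul_assoc,
      nonsing_inv_mul_cancel_left _ _ ((isUnit_iff_isUnit_det _).1 hB), w_def, mulVec_mulVec]
  have observation_term : R⁻¹ *ᵥ (y - H *ᵥ analysis B R H xb y) = w := by
    rw [sub_mulVec_analysis hS, mulVec_mulVec,
      nonsing_inv_mul _ ((isUnit_iff_isUnit_det _).1 hR), one_mulVec]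
  rw [gradient, background_term, observation_term, sub_self]

end Algebra

section Order

variable [Field 𝕜] [PartialOrder 𝕜] [StarRing 𝕜]
  {B : Matrix ι ι 𝕜} {R : Matrix κ κ 𝕜}

lemma posDef_innovationCov [Finite κ] [AddLeftMono 𝕜] (hB : B.PosSemidef) (hR : R.PosDef)
    (H : Matrix κ ι 𝕜) : (innovationCov B R H).PosDef :=
  hR.add_posSemidef (hB.mul_mul_conjTranspose_same H)

lemma posDef_hessian [Fintype κ] [DecidableEq ι] [DecidableEq κ] [AddLeftMono 𝕜]
    (hB : B.PosDef) (hR : R.PosSemidef) (H : Matrix κ ι 𝕜) : (hessian B R H).PosDef :=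
  hB.inv.add_posSemidef (hR.inv.conjTranspose_mul_mul_same H)

end Order

end ThreeDVar

open ThreeDVar in
theorem threeDVar_unique_min_general {ι κ 𝕜 : Type*} [Fintype ι] [Fintype κ] [DecidableEq ι]
    [DecidableEq κ] [Field 𝕜] [PartialOrder 𝕜] [StarRing 𝕜] [StarOrderedRing 𝕜]
    {B : Matrix ι ι 𝕜} {R : Matrix κ κ 𝕜} (hB : B.PosDef) (hR : R.PosDef)
    (H : Matrix κ ι 𝕜) (xb : ι → 𝕜) (y : κ → 𝕜) {x : ι → 𝕜} (hx : x ≠ analysis B R H xb y) :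
    cost B R H xb y (analysis B R H xb y) < cost B R H xb y x := by
  have critical : gradient B R H xb y (analysis B R H xb y) = 0 :=
    gradient_analysis hB.isUnit hR.isUnit (posDef_innovationCov hB.posSemidef hR H).isUnit xb y
  obtain ⟨e, rfl⟩ : ∃ e, x = analysis B R H xb y + e := ⟨_, (add_sub_cancel _ x).symm⟩
  have e_ne_zero : e ≠ 0 := by simpa using hx
  have curvature_pos : 0 < star e ⬝ᵥ (hessian B R H *ᵥ e) :=
    (posDef_hessian hB hR.posSemidef H).dotProduct_mulVec_pos e_ne_zero
  rw [cost_add hB.isHermitian hR.isHermitian, critical, dotProduct_zero, star_zero,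
    zero_dotProduct, add_zero, mul_zero, add_zero]
  exact lt_add_of_pos_right _ (one_half_mul_pos curvature_pos)

/-- The 3D-Var cost function attains its unique global minimum at
`xᵃ = xᵇ + B Hᵀ (R + H B Hᵀ)⁻¹ (y − H xᵇ)`. -/
theorem threeDVar_unique_min {n m : ℕ} (hn : 0 < n) (hm : 0 < m)
    (B : Matrix (Fin n) (Fin n) ℝ) (R : Matrix (Fin m) (Fin m) ℝ)
    (hB : B.PosDef) (hR : R.PosDef)
    (H : Matrix (Fin m) (Fin n) ℝ) (xb : Fin n → ℝ) (y : Fin m → ℝ)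
    (J : (Fin n → ℝ) → ℝ)
    (hJ : ∀ x, J x =
      (1/2) * ((x - xb) ⬝ᵥ (B⁻¹ *ᵥ (x - xb))) +
      (1/2) * ((y - H *ᵥ x) ⬝ᵥ (R⁻¹ *ᵥ (y - H *ᵥ x))))
    (xa : Fin n → ℝ)
    (hxa : xa = xb + (B * Hᵀ * (R + H * B * Hᵀ)⁻¹) *ᵥ (y - H *ᵥ xb)) :
    ∀ x, x ≠ xa → J xa < J x := by
  obtain rfl : J = ThreeDVar.cost B R H xb y := funext hJ
  obtain rfl : xa = ThreeDVar.analysis B R H xb y := hxa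
  exact fun x hx ↦ threeDVar_unique_min_general hB hR H xb y hx
end

section
/- Let R ∈ ℝ^{m×m} be symmetric positive definite, let v_1, …, v_N ∈ ℝ^m, and let d ∈ ℝ^m. Define Z⁽⁰⁾ = R⁻¹ d ∈ ℝ^m and U⁽⁰⁾ = R⁻¹·[v_1, …, v_N] ∈ ℝ^{m×N}, and for k = 1, …, N define h⁽ᵏ⁾ = (1 + v_kᵀ u_k⁽ᵏ⁻¹⁾)⁻¹ · u_k⁽ᵏ⁻¹⁾, Z⁽ᵏ⁾ = Z⁽ᵏ⁻¹⁾ − h⁽ᵏ⁾·(v_kᵀ Z⁽ᵏ⁻¹⁾), and U⁽ᵏ⁾ = U⁽ᵏ⁻¹⁾ − h⁽ᵏ⁾·(v_kᵀ U⁽ᵏ⁻¹⁾), where u_k⁽ᵏ⁻¹⁾ denotes the k-th column of U⁽ᵏ⁻¹⁾. Then for each k the scalar 1 + v_kᵀ u_k⁽ᵏ⁻¹⁾ is nonzero (indeed positive), the matrix R_k = R + Σ_{j=1}^{k} v_j v_jᵀ is positive definite with Z⁽ᵏ⁾ = R_k⁻¹ d and U⁽ᵏ⁾ = R_k⁻¹·[v_1,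 …, v_N], and in particular Z⁽ᴺ⁾ = (R + V Vᵀ)⁻¹ d where V = [v_1, …, v_N]. -/
open Matrix

/-! Each step of the recursion is the Sherman–Morrison formula for
`R_{k+1} = R_k + v_k v_kᴴ`, read off on the right-hand sides `d` and `V`; the column `u_k` of
`U⁽ᵏ⁾ = R_k⁻¹ V` supplies the vector `R_k⁻¹ v_k` which that formula needs. Its denominator is
`1 + v_kᴴ R_k⁻¹ v_k`, which is at least `1` because `R_k⁻¹` is positive definite. -/

theorem mul_eq_sum_vecMulVec {l n p α : Type*} [Fintype n] [NonUnitalNonAssocSemiring α]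
    (A : Matrix l n α) (B : Matrix n p α) :
    A * B = ∑ j, vecMulVec (A.col j) (B.row j) := by
  ext a b
  simp only [mul_apply, Matrix.sum_apply, vecMulVec_apply, col_apply, row_apply]

section ShermanMorrison

variable {n p K : Type*} [Fintype n] [DecidableEq n] [Field K]
  {A : Matrix n n K} {u w : n → K}

theorem inv_add_vecMulVec (hA : IsUnit A) (hpivot : 1 + w ⬝ᵥ (A⁻¹ *ᵥ u) ≠ 0) :
    (A + vecMulVec u w)⁻¹ =
      A⁻¹ - vecMulVec ((1 + w ⬝ᵥ (A⁻¹ *ᵥ u))⁻¹ • (A⁻¹ *ᵥ u)) (w ᵥ* A⁻¹) := by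
  have hcapacitance :
      (1 : Matrix Unit Unit K)⁻¹ + replicateRow Unit w * A⁻¹ * replicateCol Unit u =
        diagonal fun _ => 1 + w ⬝ᵥ (A⁻¹ *ᵥ u) := by
    rw [inv_one, Matrix.mul_assoc, ← replicateCol_mulVec]
    ext
    simp
  have hunit : IsUnit (diagonal fun _ : Unit => 1 + w ⬝ᵥ (A⁻¹ *ᵥ u)) :=
    isUnit_diagonal.2 (Pi.isUnit_iff.2 fun _ => hpivot.isUnit)
  have hwoodbury := add_mul_mul_inv_eq_sub A (replicateCol Unit u) 1 (replicateRow Unit w) hA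
    isUnit_one (hcapacitance ▸ hunit)
  rw [hcapacitance, Matrix.mul_one, ← vecMulVec_eq] at hwoodbury
  rw [hwoodbury, ← replicateCol_mulVec, Matrix.mul_assoc _ _ A⁻¹, ← replicateRow_vecMul,
    vecMulVec_eq Unit]
  congr 2
  ext
  simp [inv_subsingleton, mul_comm]

theorem inv_add_vecMulVec_mulVec (hA : IsUnit A) (hpivot : 1 + w ⬝ᵥ (A⁻¹ *ᵥ u) ≠ 0)
    (x : n → K) :
    (A + vecMulVec u w)⁻¹ *ᵥ x =
      A⁻¹ *ᵥ x - (w ⬝ᵥ (A⁻¹ *ᵥ x)) • ((1 + w ⬝ᵥ (A⁻¹ *ᵥ u))⁻¹ • (A⁻¹ *ᵥ u)) := by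
  rw [inv_add_vecMulVec hA hpivot, sub_mulVec, vecMulVec_mulVec, ← dotProduct_mulVec,
    op_smul_eq_smul]

theorem inv_add_vecMulVec_mul (hA : IsUnit A) (hpivot : 1 + w ⬝ᵥ (A⁻¹ *ᵥ u) ≠ 0)
    (B : Matrix n p K) :
    (A + vecMulVec u w)⁻¹ * B =
      A⁻¹ * B - vecMulVec ((1 + w ⬝ᵥ (A⁻¹ *ᵥ u))⁻¹ • (A⁻¹ *ᵥ u)) (w ᵥ* (A⁻¹ * B)) := by
  rw [inv_add_vecMulVec hA hpivot, Matrix.sub_mul, vecMulVec_mul, vecMul_vecMul]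

end ShermanMorrison

theorem one_add_star_dotProduct_inv_mulVec_pos {n K : Type*} [Fintype n] [DecidableEq n] [Field K]
    [PartialOrder K] [StarRing K] [StarOrderedRing K] {A : Matrix n n K} (hA : A.PosDef)
    (v : n → K) : 0 < 1 + star v ⬝ᵥ (A⁻¹ *ᵥ v) :=
  add_pos_of_pos_of_nonneg one_pos (hA.inv.posSemidef.dotProduct_mulVec_nonneg v)

/-- The matrix `R_k = R + ∑_{j < k} v_j v_jᴴ`, where `v_j` are the columns of `V`, numbered from
`0`. It is constant in `k` from `k = N` on. -/
def rankOneUpdates {n α : Type*} [NonUnitalNonAssocSemiring α] [Star α] {N : ℕ}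
    (R : Matrix n n α) (V : Matrix n (Fin N) α) (k : ℕ) : Matrix n n α :=
  R + ∑ j ∈ Finset.univ.filter (fun j : Fin N => (j : ℕ) < k),
    vecMulVec (V.col j) (star (V.col j))

section RankOneUpdates

variable {n α : Type*} [NonUnitalNonAssocSemiring α] [Star α] {N : ℕ}
  (R : Matrix n n α) (V : Matrix n (Fin N) α)

theorem rankOneUpdates_zero : rankOneUpdates R V 0 = R := by
  simp [rankOneUpdates]

theorem rankOneUpdates_succ (k : Fin N) :
    rankOneUpdates R V (k + 1) =
      rankOneUpdates R V k + vecMulVec (V.col k) (star (V.col k)) := by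
  have hfilter : Finset.univ.filter (fun j : Fin N => (j : ℕ) < k + 1) =
      insert k (Finset.univ.filter (fun j : Fin N => (j : ℕ) < k)) := by
    ext j
    simp only [Finset.mem_filter_univ, Finset.mem_insert, Fin.ext_iff]
    omega
  rw [rankOneUpdates, hfilter, Finset.sum_insert (by simp), add_comm (vecMulVec _ _), ← add_assoc,
    rankOneUpdates]

theorem rankOneUpdates_eq_add_mul_conjTranspose : rankOneUpdates R V N = R + V * Vᴴ := by
  have hrow (j : Fin N) : Vᴴ.row j = star (V.col j) := rfl
  simp only [rankOneUpdates, Fin.is_lt, Finset.filter_true, mul_eq_sum_vecMulVec, hrow]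

end RankOneUpdates

theorem posDef_rankOneUpdates {n K : Type*} [Ring K] [PartialOrder K] [StarRing K]
    [StarOrderedRing K] [Finite n] {N : ℕ} {R : Matrix n n K} (hR : R.PosDef)
    (V : Matrix n (Fin N) K) (k : ℕ) : (rankOneUpdates R V k).PosDef :=
  hR.add_posSemidef (posSemidef_sum _ fun j _ => posSemidef_vecMulVec_self_star (V.col j))

theorem ismf_correct_general {n K : Type*} [Fintype n] [DecidableEq n] [Field K] [PartialOrder K]
    [StarRing K] [StarOrderedRing K] {N : ℕ} (R : Matrix n n K) (hR : R.PosDef)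
    (V : Matrix n (Fin N) K) (d : n → K) (Z : ℕ → n → K) (U : ℕ → Matrix n (Fin N) K)
    (hZ0 : Z 0 = R⁻¹ *ᵥ d) (hU0 : U 0 = R⁻¹ * V)
    (hrec : ∀ k : Fin N,
      letI v := star (V.col k)
      letI u := (U k).col k
      letI h := (1 + v ⬝ᵥ u)⁻¹ • u
      Z (k + 1) = Z k - (v ⬝ᵥ Z k) • h ∧ U (k + 1) = U k - vecMulVec h (v ᵥ* U k)) :
    (∀ k : Fin N, 0 < 1 + star (V.col k) ⬝ᵥ (U k).col k) ∧
    (∀ k ≤ N, (rankOneUpdates R V k).PosDef ∧ Z k = (rankOneUpdates R V k)⁻¹ *ᵥ d ∧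
      U k = (rankOneUpdates R V k)⁻¹ * V) ∧
    Z N = (R + V * Vᴴ)⁻¹ *ᵥ d := by
  have hposDef := posDef_rankOneUpdates hR V
  have hpivot (k : Fin N) := one_add_star_dotProduct_inv_mulVec_pos (hposDef k) (V.col k)
  have hsolve : ∀ k ≤ N, Z k = (rankOneUpdates R V k)⁻¹ *ᵥ d ∧
      U k = (rankOneUpdates R V k)⁻¹ * V := by
    intro k
    induction k with
    | zero => exact fun _ => by simpa only [rankOneUpdates_zero] using ⟨hZ0, hU0⟩
    | succ k ih =>
      intro hk
      obtain ⟨hZ, hU⟩ := ih (Nat.le_of_succ_le hk)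
      lift k to Fin N using hk
      obtain ⟨hZsucc, hUsucc⟩ := hrec k
      have hunit := (hposDef k).isUnit
      have hne := (hpivot k).ne'
      rw [hZsucc, hUsucc, hZ, hU, rankOneUpdates_succ,
        inv_add_vecMulVec_mulVec hunit hne, inv_add_vecMulVec_mul hunit hne]
      exact ⟨rfl, rfl⟩
  refine ⟨fun k => ?_, fun k hk => ⟨hposDef k, hsolve k hk⟩, ?_⟩
  · rw [(hsolve k k.is_lt.le).2]
    exact hpivot k
  · rw [(hsolve N le_rfl).1, rankOneUpdates_eq_add_mul_conjTranspose]

/-- Correctness of the iterative Sherman–Morrison formula (ISMF): at each step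
the pivot `1 + v_kᵀ u_k⁽ᵏ⁻¹⁾` is positive, the intermediate quantities satisfy
`Z⁽ᵏ⁾ = R_k⁻¹ d` and `U⁽ᵏ⁾ = R_k⁻¹ V` with `R_k = R + Σ_{j<k} v_j v_jᵀ`
positive definite, and in particular `Z⁽ᴺ⁾ = (R + V Vᵀ)⁻¹ d`. -/
theorem ismf_correct {m N : ℕ}
    (R : Matrix (Fin m) (Fin m) ℝ) (hR : R.PosDef)
    (V : Matrix (Fin m) (Fin N) ℝ) (d : Fin m → ℝ)
    (Z : ℕ → Fin m → ℝ) (U : ℕ → Matrix (Fin m) (Fin N) ℝ)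
    (hZ0 : Z 0 = R⁻¹ *ᵥ d)
    (hU0 : U 0 = R⁻¹ * V)
    (hrec : ∀ k : Fin N,
      letI v : Fin m → ℝ := fun i => V i k
      letI u : Fin m → ℝ := fun i => U (k : ℕ) i k
      letI h : Fin m → ℝ := (1 + v ⬝ᵥ u)⁻¹ • u
      Z ((k : ℕ) + 1) = Z (k : ℕ) - (v ⬝ᵥ Z (k : ℕ)) • h ∧
      U ((k : ℕ) + 1) =
        U (k : ℕ) - Matrix.of (fun i j => h i * (v ⬝ᵥ fun l => U (k : ℕ) l j))) :
    (∀ k : Fin N,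
      0 < 1 + (fun i => V i k) ⬝ᵥ (fun i => U (k : ℕ) i k)) ∧
    (∀ k ≤ N,
      letI Rk : Matrix (Fin m) (Fin m) ℝ :=
        R + ∑ j ∈ Finset.univ.filter (fun j : Fin N => (j : ℕ) < k),
          vecMulVec (fun i => V i j) (fun i => V i j)
      Rk.PosDef ∧ Z k = Rk⁻¹ *ᵥ d ∧ U k = Rk⁻¹ * V) ∧
    Z N = (R + V * Vᵀ)⁻¹ *ᵥ d := by
  -- `star` on `ℝ` and on real vectors is the identity definitionally.
  exact ismf_correct_general R hR V d Z U hZ0 hU0 hrec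
end

section
/- Let R ∈ ℝ^{m×m} be symmetric positive definite, S ∈ ℝ^{n×N}, H ∈ ℝ^{m×n}, and set V = H·S and P^b = S Sᵀ. Then there exists a symmetric positive semidefinite matrix Γ ∈ ℝ^{N×N} with Γ·Γ = I_N − Vᵀ (R + V Vᵀ)⁻¹ V, and any such Γ satisfies (S·Γ)·(S·Γ)ᵀ = P^b − P^b Hᵀ (R + H P^b Hᵀ)⁻¹ H P^b. -/
open Matrix

section

variable {m n N k : Type*} [Fintype m] [Fintype n] [Fintype N] [Fintype k]

open scoped ComplexOrder

-- Both sides assert positivity of the block matrix `[1, Vᴴ; V, R + V Vᴴ]`: its Schur complements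
-- with respect to the two diagonal blocks are `R` and `1 - Vᴴ (R + V Vᴴ)⁻¹ V`.
theorem posSemidef_one_sub_conjTranspose_mul_inv_mul_iff {K : Type*} [Field K] [PartialOrder K]
    [StarRing K] [StarOrderedRing K] [DecidableEq m] [DecidableEq N] {R : Matrix m m K}
    {V : Matrix m N K} (hRV : (R + V * Vᴴ).PosDef) :
    (1 - Vᴴ * (R + V * Vᴴ)⁻¹ * V).PosSemidef ↔ R.PosSemidef := by
  have := hRV.isUnit.invertible
  have := invertibleOne (α := Matrix N N K)
  calc (1 - Vᴴ * (R + V * Vᴴ)⁻¹ * V).PosSemidef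
      ↔ (fromBlocks 1 Vᴴ Vᴴᴴ (R + V * Vᴴ)).PosSemidef := by
        rw [hRV.fromBlocks₂₂, conjTranspose_conjTranspose]
    _ ↔ R.PosSemidef := by
        rw [PosDef.one.fromBlocks₁₁, conjTranspose_conjTranspose, inv_one, Matrix.mul_one,
          add_sub_cancel_right]

open scoped MatrixOrder in
theorem exists_posSemidef_mul_self_eq {𝕜 : Type*} [RCLike 𝕜] {M : Matrix N N 𝕜}
    (hM : M.PosSemidef) : ∃ G : Matrix N N 𝕜, G.PosSemidef ∧ G * G = M := by
  classical
  exact ⟨CFC.sqrt M, (CFC.sqrt_nonneg M).posSemidef, CFC.sqrt_mul_sqrt_self M hM.nonneg⟩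

theorem mul_one_sub_conjTranspose_mul_mul_mul_conjTranspose {α : Type*} [Ring α] [StarRing α]
    [DecidableEq N] (S : Matrix n N α) (H : Matrix m n α) (K : Matrix m m α) :
    S * (1 - (H * S)ᴴ * K * (H * S)) * Sᴴ =
      S * Sᴴ - S * Sᴴ * Hᴴ * K * H * (S * Sᴴ) := by
  simp only [conjTranspose_mul, Matrix.mul_sub, Matrix.sub_mul, Matrix.mul_one, Matrix.mul_assoc]

theorem ensrf_sqrt_exists_and_covariance_general {𝕜 : Type*} [RCLike 𝕜]
    [DecidableEq m] [DecidableEq N] {R : Matrix m m 𝕜} (hR : R.PosSemidef)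
    (S : Matrix n N 𝕜) (H : Matrix m n 𝕜)
    {V : Matrix m N 𝕜} (hV : V = H * S) (hRV : IsUnit (R + V * Vᴴ))
    {Pb : Matrix n n 𝕜} (hPb : Pb = S * Sᴴ) :
    (∃ G : Matrix N N 𝕜, G.PosSemidef ∧ G * G = 1 - Vᴴ * (R + V * Vᴴ)⁻¹ * V) ∧
    ∀ G : Matrix N k 𝕜, G * Gᴴ = 1 - Vᴴ * (R + V * Vᴴ)⁻¹ * V →
      (S * G) * (S * G)ᴴ = Pb - Pb * Hᴴ * (R + H * Pb * Hᴴ)⁻¹ * H * Pb := by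
  have hRVpos : (R + V * Vᴴ).PosDef :=
    (hR.add (posSemidef_self_mul_conjTranspose V)).posDef_iff_isUnit.mpr hRV
  refine ⟨exists_posSemidef_mul_self_eq
    ((posSemidef_one_sub_conjTranspose_mul_inv_mul_iff hRVpos).mpr hR), fun G hG => ?_⟩
  have hinnovation : V * Vᴴ = H * Pb * Hᴴ := by
    simp only [hV, hPb, conjTranspose_mul, Matrix.mul_assoc]
  calc (S * G) * (S * G)ᴴ = S * (G * Gᴴ) * Sᴴ := by
        simp only [conjTranspose_mul, Matrix.mul_assoc]
    _ = S * (1 - Vᴴ * (R + H * Pb * Hᴴ)⁻¹ * V) * Sᴴ := by rw [hG, hinnovation]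
    _ = Pb - Pb * Hᴴ * (R + H * Pb * Hᴴ)⁻¹ * H * Pb := by
        rw [hV, mul_one_sub_conjTranspose_mul_mul_mul_conjTranspose, ← hPb]

end

/-- There exists a symmetric positive semidefinite square root `Γ` of
`I − Vᵀ (R + V Vᵀ)⁻¹ V`, and any such `Γ` yields analysis deviations `S Γ`
whose covariance equals the Kalman-filter analysis covariance. -/
theorem ensrf_sqrt_exists_and_covariance {n m N : ℕ}
    (R : Matrix (Fin m) (Fin m) ℝ) (hR : R.PosDef)
    (S : Matrix (Fin n) (Fin N) ℝ)
    (H : Matrix (Fin m) (Fin n) ℝ)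
    (V : Matrix (Fin m) (Fin N) ℝ) (hV : V = H * S)
    (Pb : Matrix (Fin n) (Fin n) ℝ) (hPb : Pb = S * Sᵀ) :
    (∃ G : Matrix (Fin N) (Fin N) ℝ, G.PosSemidef ∧
      G * G = (1 : Matrix (Fin N) (Fin N) ℝ) - Vᵀ * (R + V * Vᵀ)⁻¹ * V) ∧
    ∀ G : Matrix (Fin N) (Fin N) ℝ, G.PosSemidef →
      G * G = (1 : Matrix (Fin N) (Fin N) ℝ) - Vᵀ * (R + V * Vᵀ)⁻¹ * V →
      (S * G) * (S * G)ᵀ =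
        Pb - Pb * Hᵀ * (R + H * Pb * Hᵀ)⁻¹ * H * Pb := by
  have hRV := (hR.add_posSemidef (posSemidef_self_mul_conjTranspose V)).isUnit
  simp only [← conjTranspose_eq_transpose_of_trivial] at hPb ⊢
  exact (ensrf_sqrt_exists_and_covariance_general hR.posSemidef S H hV hRV hPb).imp_right
    fun h G hG hGG => h G (by rw [hG.isHermitian.eq, hGG])
end
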